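/- arXiv:1807.08672 — 2 statements merged into one kernel-verified Lean document; each statement's English description precedes it below -/
import Mathlib

section
/- For every z > 2, |P(W ≥ z) − P(W̄ > z)| ≤ 2 Σᵢ₌₁ⁿ P(|ξᵢ| > z/4) + 4 e² (1 + z)^{−2} (β₂ + β₃). -/
open MeasureTheory ProbabilityTheory Real

/-- The standard normal cumulative distribution function. -/
noncomputable def Phi (z : ℝ) : ℝ :=
  (Real.sqrt (2 * Real.pi))⁻¹ * ∫ u in Set.Iic z, Real.exp (-u ^ 2 / 2)

/-- The bounded solution `f_z` of the Stein equation
`f'(w) - w f(w) = 1{w ≤ z} - Φ(z)`. -/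
noncomputable def fz (z w : ℝ) : ℝ :=
  if w ≤ z then Real.sqrt (2 * Real.pi) * Real.exp (w ^ 2 / 2) * Phi w * (1 - Phi z)
  else Real.sqrt (2 * Real.pi) * Real.exp (w ^ 2 / 2) * Phi z * (1 - Phi w)

/-- The derivative `f_z'`, expressed via the Stein equation. -/
noncomputable def fz' (z w : ℝ) : ℝ :=
  w * fz z w + (if w ≤ z then 1 else 0) - Phi z

/-- The truncation `x̄ᵢ = ξᵢ 1{ξᵢ ≤ 1}`. -/
noncomputable def xbar {Ω : Type*} {n : ℕ} (ξ : Fin n → Ω → ℝ) (i : Fin n) (ω : Ω) : ℝ :=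
  if ξ i ω ≤ 1 then ξ i ω else 0

/-- `W̄ = ∑ᵢ x̄ᵢ`. -/
noncomputable def Wbar {Ω : Type*} {n : ℕ} (ξ : Fin n → Ω → ℝ) (ω : Ω) : ℝ :=
  ∑ i, xbar ξ i ω

/-- `W̄⁽ⁱ⁾ = W̄ - x̄ᵢ`. -/
noncomputable def Wbari {Ω : Type*} {n : ℕ} (ξ : Fin n → Ω → ℝ) (i : Fin n) (ω : Ω) : ℝ :=
  Wbar ξ ω - xbar ξ i ω

/-- `K̄ᵢ(t) = E[x̄ᵢ (1{0 ≤ t ≤ x̄ᵢ} - 1{x̄ᵢ ≤ t < 0})]`. -/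
noncomputable def Kbar {Ω : Type*} [MeasureSpace Ω] {n : ℕ} (ξ : Fin n → Ω → ℝ)
    (i : Fin n) (t : ℝ) : ℝ :=
  ∫ ω, xbar ξ i ω * ((if 0 ≤ t ∧ t ≤ xbar ξ i ω then (1 : ℝ) else 0)
    - (if xbar ξ i ω ≤ t ∧ t < 0 then (1 : ℝ) else 0))

/-- `β₂ = ∑ᵢ E[ξᵢ² 1{|ξᵢ| > 1}]`. -/
noncomputable def beta2 {Ω : Type*} [MeasureSpace Ω] {n : ℕ} (ξ : Fin n → Ω → ℝ) : ℝ :=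
  ∑ i, ∫ ω, (if 1 < |ξ i ω| then (ξ i ω) ^ 2 else 0)

/-- `β₃ = ∑ᵢ E[|ξᵢ|³ 1{|ξᵢ| ≤ 1}]`. -/
noncomputable def beta3 {Ω : Type*} [MeasureSpace Ω] {n : ℕ} (ξ : Fin n → Ω → ℝ) : ℝ :=
  ∑ i, ∫ ω, (if |ξ i ω| ≤ 1 then |ξ i ω| ^ 3 else 0)


section aux
variable {Ω : Type*} [MeasureSpace Ω] [IsProbabilityMeasure (ℙ : Measure Ω)]
    {n : ℕ} {ξ : Fin n → Ω → ℝ}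

/-- The truncation function. -/
noncomputable def tr (x : ℝ) : ℝ := if x ≤ 1 then x else 0

lemma measurable_tr : Measurable tr :=
  Measurable.ite measurableSet_Iic measurable_id measurable_const

lemma tr_le (x : ℝ) : tr x ≤ x := by
  unfold tr; split_ifs <;> linarith

lemma tr_le_one (x : ℝ) : tr x ≤ 1 := by
  unfold tr; split_ifs <;> linarith

lemma abs_tr_le (x : ℝ) : |tr x| ≤ |x| := by
  unfold tr; split_ifs <;> simp

lemma tr_sq_le (x : ℝ) : tr x ^ 2 ≤ x ^ 2 := sq_le_sq.2 (abs_tr_le x)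

lemma Wbar_eq {Ω : Type*} {n : ℕ} {ξ : Fin n → Ω → ℝ} (ω : Ω) : Wbar ξ ω = ∑ i, tr (ξ i ω) := rfl

lemma exp_le_quad {x : ℝ} (hx : x ≤ 1) : Real.exp x ≤ 1 + x + x ^ 2 := by
  by_cases h : -1 ≤ x
  · have := Real.abs_exp_sub_one_sub_id_le (abs_le.2 ⟨h, hx⟩)
    have := (abs_le.1 this).2
    linarith
  · have : Real.exp x ≤ 1 := Real.exp_le_one_iff.2 (by linarith)
    nlinarith

lemma indep_rest (hmeas : ∀ i, Measurable (ξ i)) (hindep : iIndepFun ξ ℙ)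
    (g : ℝ → ℝ) (hg : Measurable g) (i : Fin n) :
    IndepFun (ξ i) (fun ω => ∑ j ∈ Finset.univ.erase i, g (ξ j ω)) ℙ := by
  have h := hindep.indepFun_finset {i} (Finset.univ.erase i)
    (by simp) hmeas
  have m1 : Measurable (fun v : (({i} : Finset (Fin n)) → ℝ) => v ⟨i, by simp⟩) :=
    measurable_pi_apply _
  have m2 : Measurable (fun v : (↥(Finset.univ.erase i) → ℝ) =>
      ∑ j : ↥(Finset.univ.erase i), g (v j)) :=
    Finset.measurable_sum _ fun j _ => hg.comp (measurable_pi_apply _)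
  have h2 := h.comp m1 m2
  have e : (fun ω => ∑ j ∈ Finset.univ.erase i, g (ξ j ω)) =
    (fun v : (↥(Finset.univ.erase i) → ℝ) =>
      ∑ j : (Finset.univ.erase i : Finset (Fin n)), g (v j)) ∘ (fun a j => ξ j a) := by
    funext ω
    exact (Finset.sum_coe_sort (Finset.univ.erase i) (fun j => g (ξ j ω))).symm
  rw [e]
  exact h2

lemma integral_sq_sum (hmeas : ∀ i, Measurable (ξ i)) (hindep : iIndepFun ξ ℙ)
    (hL2 : ∀ i, MemLp (ξ i) 2 ℙ) (hmean : ∀ i, ∫ ω, ξ i ω = 0) (s : Finset (Fin n)) :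
    ∫ ω, (∑ i ∈ s, ξ i ω) ^ 2 = ∑ i ∈ s, ∫ ω, (ξ i ω) ^ 2 := by
  have h := IndepFun.variance_sum (μ := (ℙ : Measure Ω)) (X := ξ) (s := s)
    (fun i _ => hL2 i) (fun i _ j _ hij => hindep.indepFun hij)
  rw [variance_of_integral_eq_zero] at h
  · simp only [Finset.sum_apply] at h
    rw [h]
    exact Finset.sum_congr rfl fun i _ =>
      variance_of_integral_eq_zero (hmeas i).aemeasurable (hmean i)
  · exact (Finset.aemeasurable_sum _ fun i _ => (hmeas i).aemeasurable)
  · simp only [Finset.sum_apply]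
    rw [integral_finsetSum _ fun i _ => (hL2 i).integrable (by norm_num)]
    simp [hmean]

lemma chebyshev (hmeas : ∀ i, Measurable (ξ i)) (hindep : iIndepFun ξ ℙ)
    (hL2 : ∀ i, MemLp (ξ i) 2 ℙ) (hmean : ∀ i, ∫ ω, ξ i ω = 0)
    (hvar : ∑ i, ∫ ω, (ξ i ω) ^ 2 = 1) (s : Finset (Fin n)) {t : ℝ} (ht : 0 < t) :
    (ℙ : Measure Ω).real {ω | t ≤ ∑ i ∈ s, ξ i ω} ≤ (t ^ 2)⁻¹ := by
  have hi : MemLp (fun ω => ∑ i ∈ s, ξ i ω) 2 ℙ := memLp_finsetSum _ fun i _ => hL2 i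
  have h := mul_meas_ge_le_integral_of_nonneg (μ := (ℙ : Measure Ω))
    (f := fun ω => (∑ i ∈ s, ξ i ω) ^ 2) (Filter.Eventually.of_forall fun ω => sq_nonneg _)
    hi.integrable_sq (t ^ 2)
  rw [integral_sq_sum hmeas hindep hL2 hmean] at h
  have h2 : ∑ i ∈ s, ∫ ω, (ξ i ω) ^ 2 ≤ 1 := by
    rw [← hvar]
    exact Finset.sum_le_univ_sum_of_nonneg fun i => integral_nonneg fun ω => sq_nonneg _
  have h3 : (ℙ : Measure Ω).real {ω | t ≤ ∑ i ∈ s, ξ i ω} ≤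
      (ℙ : Measure Ω).real {ω | t ^ 2 ≤ (∑ i ∈ s, ξ i ω) ^ 2} :=
    measureReal_mono fun ω hω => pow_le_pow_left₀ ht.le hω 2
  have h4 : (0:ℝ) < t ^ 2 := by positivity
  rw [← one_div, le_div_iff₀ h4]
  nlinarith

lemma tail (hmeas : ∀ i, Measurable (ξ i)) (hindep : iIndepFun ξ ℙ)
    (hL2 : ∀ i, MemLp (ξ i) 2 ℙ) (hmean : ∀ i, ∫ ω, ξ i ω = 0)
    (hvar : ∑ i, ∫ ω, (ξ i ω) ^ 2 = 1) (a : ℝ) :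
    (ℙ : Measure Ω).real {ω | a ≤ Wbar ξ ω} ≤ Real.exp (1 - a) := by
  have hm : ∀ i, Measurable (fun ω => tr (ξ i ω)) := fun i => measurable_tr.comp (hmeas i)
  have hmW : Measurable (Wbar ξ) := Finset.measurable_sum _ fun i _ => hm i
  have hY2 : ∀ i, MemLp (fun ω => tr (ξ i ω)) 2 ℙ := fun i =>
    (hL2 i).mono (hm i).aestronglyMeasurable (Filter.Eventually.of_forall fun ω => abs_tr_le _)
  have hind : iIndepFun (fun i ω => tr (ξ i ω)) ℙ :=
    hindep.comp (fun _ => tr) (fun _ => measurable_tr)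
  have hint : Integrable (fun ω => Real.exp (1 * Wbar ξ ω)) ℙ := by
    refine Integrable.of_bound (by fun_prop) (Real.exp n) (Filter.Eventually.of_forall fun ω => ?_)
    rw [Real.norm_eq_abs, abs_of_pos (Real.exp_pos _), one_mul]
    apply Real.exp_le_exp.2
    calc Wbar ξ ω ≤ ∑ i : Fin n, (1:ℝ) := Finset.sum_le_sum fun i _ => tr_le_one _
      _ = n := by simp
  have h := measure_ge_le_exp_mul_mgf (μ := (ℙ : Measure Ω)) (X := Wbar ξ) (t := 1) a
    (by norm_num) hint
  have hmgf : mgf (Wbar ξ) ℙ 1 ≤ Real.exp 1 := by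
    have e : Wbar ξ = ∑ i, (fun ω => tr (ξ i ω)) := by
      funext ω; simp [Wbar_eq]
    rw [e, hind.mgf_sum hm, show Real.exp 1 = Real.exp (∑ i, ∫ ω, (ξ i ω) ^ 2) by rw [hvar],
      Real.exp_sum]
    refine Finset.prod_le_prod (fun i _ => mgf_nonneg) fun i _ => ?_
    have i1 := (hY2 i).integrable (by norm_num : (1:ENNReal) ≤ 2)
    have i2 := (hY2 i).integrable_sq
    have i3 := (hL2 i).integrable (by norm_num : (1:ENNReal) ≤ 2)
    have i4 := (hL2 i).integrable_sq
    have ii : Integrable (fun ω => Real.exp (1 * tr (ξ i ω))) ℙ := by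
      refine Integrable.of_bound
        (Real.measurable_exp.comp ((hm i).const_mul 1)).aestronglyMeasurable (Real.exp 1)
        (Filter.Eventually.of_forall fun ω => ?_)
      rw [Real.norm_eq_abs, abs_of_pos (Real.exp_pos _), one_mul]
      exact Real.exp_le_exp.2 (tr_le_one _)
    calc mgf (fun ω => tr (ξ i ω)) ℙ 1 = ∫ ω, Real.exp (1 * tr (ξ i ω)) := rfl
      _ ≤ ∫ ω, (1 + ξ i ω + ξ i ω ^ 2) := by
        refine integral_mono ii (((integrable_const 1).add i3).add i4) fun ω => ?_
        have := exp_le_quad (tr_le_one (ξ i ω))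
        have h1 := tr_le (ξ i ω)
        have h2 := tr_sq_le (ξ i ω)
        simp only [one_mul]
        linarith
      _ = 1 + ∫ ω, ξ i ω ^ 2 := by
        rw [integral_add (by exact (integrable_const 1).add i3) i4,
          integral_add (integrable_const 1) i3, hmean]
        simp
      _ ≤ _ := by rw [add_comm]; exact Real.add_one_le_exp _
  refine h.trans ?_
  calc Real.exp (-1 * a) * mgf (Wbar ξ) ℙ 1 ≤ Real.exp (-1 * a) * Real.exp 1 := by gcongr
    _ = _ := by rw [← Real.exp_add]; ring_nf

/-- Clipped ramp. -/
noncomputable def ramp (z δ w : ℝ) : ℝ := max 0 (min (w - (z - δ)) (2 * δ))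

/-- Local second-moment quantity. -/
noncomputable def sq1 (δ x : ℝ) : ℝ := |tr x| * min |tr x| δ

lemma ramp_mono (z δ : ℝ) : Monotone (ramp z δ) := fun a b h => by
  unfold ramp; gcongr

lemma measurable_ramp (z δ : ℝ) : Measurable (ramp z δ) := (ramp_mono z δ).measurable

lemma ramp_nonneg (z δ w : ℝ) : 0 ≤ ramp z δ w := le_max_left _ _

lemma ramp_le {δ : ℝ} (hδ : 0 < δ) (z w : ℝ) : ramp z δ w ≤ 2 * δ :=
  max_le (by linarith) (min_le_right _ _)

lemma ramp_zero {z δ w : ℝ} (h : w ≤ z - δ) : ramp z δ w = 0 :=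
  max_eq_left ((min_le_left _ _).trans (by linarith))

lemma ramp_diff_nonneg (z δ w x : ℝ) : 0 ≤ x * (ramp z δ w - ramp z δ (w - tr x)) := by
  unfold tr
  split_ifs with h
  · rcases le_total 0 x with h0 | h0
    · exact mul_nonneg h0 (sub_nonneg.2 (ramp_mono z δ (by linarith)))
    · exact mul_nonneg_of_nonpos_of_nonpos h0 (sub_nonpos.2 (ramp_mono z δ (by linarith)))
  · simp

lemma ramp_diff_eq {δ : ℝ} (hδ : 0 < δ) (z x : ℝ) :
    x * (ramp z δ z - ramp z δ (z - tr x)) = sq1 δ x := by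
  unfold tr sq1 tr
  split_ifs with h
  · rcases le_total 0 x with h0 | h0
    · rw [abs_of_nonneg h0]
      congr 1
      unfold ramp
      rcases le_total x δ with h1 | h1
      · rw [min_eq_left h1, min_eq_left (by linarith), min_eq_left (by linarith),
          max_eq_right (by linarith), max_eq_right (by linarith)]
        ring
      · rw [min_eq_right h1, min_eq_left (by linarith), min_eq_left (by linarith),
          max_eq_right (by linarith), max_eq_left (by linarith)]
        ring
    · rw [abs_of_nonpos h0]
      have : ramp z δ (z - x) - ramp z δ z = min (-x) δ := by
        unfold ramp
        rcases le_total (-x) δ with h1 | h1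
        · rw [min_eq_left h1, min_eq_left (by linarith), min_eq_left (by linarith),
            max_eq_right (by linarith), max_eq_right (by linarith)]
          ring
        · rw [min_eq_right h1, min_eq_right (by linarith), min_eq_left (by linarith),
            max_eq_right (by linarith), max_eq_right (by linarith)]
          ring
      rw [← this]; ring
  · simp

lemma measurable_sq1 (δ : ℝ) : Measurable (sq1 δ) := by
  have := measurable_tr
  unfold sq1
  have h : Measurable fun x => |tr x| := this.abs
  exact h.mul (h.min measurable_const)

lemma sq1_nonneg {δ : ℝ} (hδ : 0 < δ) (x : ℝ) : 0 ≤ sq1 δ x :=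
  mul_nonneg (abs_nonneg _) (le_min (abs_nonneg _) hδ.le)

lemma sq1_le {δ : ℝ} (hδ : 0 < δ) (x : ℝ) : sq1 δ x ≤ δ * |x| := by
  unfold sq1
  rw [mul_comm]
  exact mul_le_mul (min_le_right _ _) (abs_tr_le x) (abs_nonneg _) hδ.le

lemma sq1_ge {δ : ℝ} (hδ : 0 < δ) (x : ℝ) :
    x ^ 2 - (if 1 < |x| then x ^ 2 else 0) - (4 * δ)⁻¹ * (if |x| ≤ 1 then |x| ^ 3 else 0)
      ≤ sq1 δ x := by
  by_cases h : 1 < |x|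
  · rw [if_pos h, if_neg (not_le.2 h)]
    have := sq1_nonneg hδ x
    linarith
  · rw [if_neg h, if_pos (not_lt.1 h)]
    have hx : tr x = x := if_pos ((le_abs_self x).trans (not_lt.1 h))
    unfold sq1
    rw [hx, ← sq_abs x]
    have h0 := abs_nonneg x
    generalize |x| = y at *
    have e : y ^ 2 - 0 - (4 * δ)⁻¹ * y ^ 3 = y * (y - y ^ 2 / (4 * δ)) := by
      field_simp; ring
    rw [e]
    apply mul_le_mul_of_nonneg_left _ h0
    apply le_min
    · have : 0 ≤ y ^ 2 / (4 * δ) := by positivity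
      linarith
    · have : y ^ 2 / (4 * δ) - y + δ = (y - 2 * δ) ^ 2 / (4 * δ) := by field_simp; ring
      have : 0 ≤ (y - 2 * δ) ^ 2 / (4 * δ) := by positivity
      linarith

lemma conc (hmeas : ∀ i, Measurable (ξ i)) (hindep : iIndepFun ξ ℙ)
    (hL2 : ∀ i, MemLp (ξ i) 2 ℙ) (hmean : ∀ i, ∫ ω, ξ i ω = 0)
    (hvar : ∑ i, ∫ ω, (ξ i ω) ^ 2 = 1) (z δ : ℝ) (hδ : 0 < δ) (hδ4 : 4 * δ ≤ 1)
    (hβ : beta2 ξ + beta3 ξ ≤ 2 * δ) :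
    (ℙ : Measure Ω).real {ω | Wbar ξ ω = z} ≤ 6 * δ * Real.exp ((1 - (z - δ)) / 2) := by
  set c := Real.exp ((1 - (z - δ)) / 2) with hc
  have hcpos : 0 < c := Real.exp_pos _
  have hm : ∀ i, Measurable (fun ω => tr (ξ i ω)) := fun i => measurable_tr.comp (hmeas i)
  have hmW : Measurable (Wbar ξ) := Finset.measurable_sum _ fun i _ => hm i
  have hI1 : ∀ i, Integrable (ξ i) ℙ := fun i => (hL2 i).integrable (by norm_num)
  set A : Set Ω := {ω | z - δ ≤ Wbar ξ ω} with hA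
  set B : Set Ω := {ω | Wbar ξ ω = z} with hB
  have mA : MeasurableSet A := measurableSet_le measurable_const hmW
  have mB : MeasurableSet B := measurableSet_eq_fun hmW measurable_const
  have hPA : (ℙ : Measure Ω).real A ≤ c ^ 2 := by
    refine (tail hmeas hindep hL2 hmean hvar (z - δ)).trans_eq ?_
    rw [hc, ← Real.exp_nat_mul]; congr 1; push_cast; ring
  -- the variable S
  have hsm : ∀ i, Measurable (fun ω => sq1 δ (ξ i ω)) := fun i => (measurable_sq1 δ).comp (hmeas i)
  have hs2 : ∀ i, MemLp (fun ω => sq1 δ (ξ i ω)) 2 ℙ := fun i => by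
    refine ((hL2 i).const_mul δ).mono (hsm i).aestronglyMeasurable
      (Filter.Eventually.of_forall fun ω => ?_)
    rw [Real.norm_eq_abs, Real.norm_eq_abs, abs_of_nonneg (sq1_nonneg hδ _), abs_mul,
      abs_of_pos hδ]
    exact sq1_le hδ _
  have hs1 : ∀ i, Integrable (fun ω => sq1 δ (ξ i ω)) ℙ :=
    fun i => (hs2 i).integrable (by norm_num)
  set S : Ω → ℝ := fun ω => ∑ i, sq1 δ (ξ i ω) with hS
  have hSm : Measurable S := Finset.measurable_sum _ fun i _ => hsm i
  have hS2 : MemLp S 2 ℙ := memLp_finsetSum _ fun i _ => hs2 i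
  set m := ∫ ω, S ω with hmdef
  have hVar : ∫ ω, (S ω - m) ^ 2 ≤ δ ^ 2 := by
    have e : S = ∑ i, (fun ω => sq1 δ (ξ i ω)) := by funext ω; simp [hS]
    rw [hmdef, ← variance_eq_integral hSm.aemeasurable, e, IndepFun.variance_sum (fun i _ => hs2 i)
      (fun i _ j _ hij => (hindep.indepFun hij).comp (measurable_sq1 δ) (measurable_sq1 δ))]
    calc _ ≤ ∑ i, δ ^ 2 * ∫ ω, (ξ i ω) ^ 2 := by
          refine Finset.sum_le_sum fun i _ => ?_
          refine (variance_le_expectation_sq (hsm i).aestronglyMeasurable).trans ?_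
          rw [← integral_const_mul]
          refine integral_mono (hs2 i).integrable_sq ((hL2 i).integrable_sq.const_mul _)
            fun ω => ?_
          have h1 := sq1_le hδ (ξ i ω)
          have h2 := sq1_nonneg hδ (ξ i ω)
          simp only [Pi.pow_apply]
          rw [← sq_abs (ξ i ω), ← mul_pow]
          exact pow_le_pow_left₀ h2 h1 2
      _ = δ ^ 2 := by rw [← Finset.mul_sum, hvar, mul_one]
  have hmean_ge : 1 / 2 ≤ m := by
    have e : m = ∑ i, ∫ ω, sq1 δ (ξ i ω) := integral_finsetSum _ fun i _ => hs1 i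
    have hb2 : ∀ i, Integrable (fun ω => if 1 < |ξ i ω| then (ξ i ω) ^ 2 else 0) ℙ := fun i => by
      refine (hL2 i).integrable_sq.mono' (Measurable.aestronglyMeasurable ?_)
        (Filter.Eventually.of_forall fun ω => ?_)
      · exact Measurable.ite (measurableSet_lt measurable_const (hmeas i).abs)
          ((hmeas i).pow_const 2) measurable_const
      · split_ifs <;> simp [sq_nonneg]
    have hb3 : ∀ i, Integrable (fun ω => if |ξ i ω| ≤ 1 then |ξ i ω| ^ 3 else 0) ℙ := fun i => by
      refine Integrable.of_bound (Measurable.aestronglyMeasurable ?_) 1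
        (Filter.Eventually.of_forall fun ω => ?_)
      · exact Measurable.ite (measurableSet_le (hmeas i).abs measurable_const)
          ((hmeas i).abs.pow_const 3) measurable_const
      · split_ifs with h
        · rw [norm_pow, Real.norm_eq_abs, abs_abs]
          exact pow_le_one₀ (abs_nonneg _) h
        · simp
    have h1 : 1 - beta2 ξ - (4 * δ)⁻¹ * beta3 ξ ≤ m := by
      rw [e, ← hvar, beta2, beta3, Finset.mul_sum, ← Finset.sum_sub_distrib,
        ← Finset.sum_sub_distrib]
      refine Finset.sum_le_sum fun i _ => ?_
      rw [← integral_const_mul, ← integral_sub (hL2 i).integrable_sq (hb2 i),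
        ← integral_sub (by exact (hL2 i).integrable_sq.sub (hb2 i)) ((hb3 i).const_mul _)]
      exact integral_mono (((hL2 i).integrable_sq.sub (hb2 i)).sub ((hb3 i).const_mul _)) (hs1 i)
        fun ω => sq1_ge hδ (ξ i ω)
    have hb2n : 0 ≤ beta2 ξ := Finset.sum_nonneg fun i _ => integral_nonneg fun ω => by
      simp only [Pi.zero_apply]; split_ifs <;> positivity
    have h4 : 1 ≤ (4 * δ)⁻¹ := (one_le_inv₀ (by positivity)).2 hδ4
    have h5 : (4 * δ)⁻¹ * (2 * δ) = 1 / 2 := by field_simp; norm_num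
    have h6 : (4 * δ)⁻¹ * (beta2 ξ + beta3 ξ) ≤ 1 / 2 := by
      rw [← h5]; gcongr
    nlinarith
  -- leave-one-out terms
  set V : Fin n → Ω → ℝ := fun i ω => ∑ j ∈ Finset.univ.erase i, tr (ξ j ω) with hV
  have hVm : ∀ i, Measurable (V i) := fun i => Finset.measurable_sum _ fun j _ => hm j
  have hVW : ∀ i ω, V i ω = Wbar ξ ω - tr (ξ i ω) := fun i ω => by
    rw [Wbar_eq, ← Finset.add_sum_erase _ _ (Finset.mem_univ i)]; simp [hV]
  have hInt : ∀ i, Integrable (fun ω => ξ i ω * ramp z δ (V i ω)) ℙ := fun i => by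
    refine (hI1 i).mul_bdd (c := 2 * δ)
      ((measurable_ramp z δ).comp (hVm i)).aestronglyMeasurable
      (Filter.Eventually.of_forall fun ω => ?_)
    rw [Real.norm_eq_abs, abs_of_nonneg (ramp_nonneg _ _ _)]
    exact ramp_le hδ _ _
  have hzero : ∀ i, ∫ ω, ξ i ω * ramp z δ (V i ω) = 0 := fun i => by
    have h := (indep_rest hmeas hindep tr measurable_tr i).comp measurable_id (measurable_ramp z δ)
    have := h.integral_mul_eq_mul_integral (hmeas i).aestronglyMeasurable
      ((measurable_ramp z δ).comp (hVm i)).aestronglyMeasurable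
    have e : ∫ ω, (id ∘ ξ i) ω = 0 := hmean i
    rw [e, zero_mul] at this
    exact this
  have hW2 : MemLp (fun ω => ∑ i, ξ i ω) 2 ℙ := memLp_finsetSum _ fun i _ => hL2 i
  have hD2 : MemLp (fun ω => S ω - m) 2 ℙ := hS2.sub (memLp_const m)
  have hIA : Integrable (A.indicator (fun _ => (1:ℝ))) ℙ := (integrable_const 1).indicator mA
  have hIB : Integrable (B.indicator (fun _ => (1:ℝ))) ℙ := (integrable_const 1).indicator mB
  have key : ∀ ω, m * B.indicator (fun _ => (1:ℝ)) ω ≤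
      ((δ * c * (∑ i, ξ i ω) ^ 2 + c / (2 * δ) * (S ω - m) ^ 2)
        + (3 / 2 * δ / c) * A.indicator (fun _ => (1:ℝ)) ω)
        - ∑ i, ξ i ω * ramp z δ (V i ω) := by
    intro ω
    have k1 : B.indicator (fun _ => (1:ℝ)) ω * S ω ≤
        (∑ i, ξ i ω) * ramp z δ (Wbar ξ ω) - ∑ i, ξ i ω * ramp z δ (V i ω) := by
      rw [Finset.sum_mul, ← Finset.sum_sub_distrib]
      simp only [hVW, ← mul_sub]
      by_cases hb : ω ∈ B
      · rw [Set.indicator_of_mem hb, one_mul]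
        have hb' : Wbar ξ ω = z := hb
        rw [hb']
        exact (Finset.sum_congr rfl fun i _ => (ramp_diff_eq hδ z (ξ i ω)).symm).le
      · rw [Set.indicator_of_notMem hb, zero_mul]
        exact Finset.sum_nonneg fun i _ => ramp_diff_nonneg _ _ _ _
    generalize (∑ i, ξ i ω * ramp z δ (V i ω)) = T at *
    generalize (∑ i, ξ i ω) = w at *
    generalize S ω = s at *
    have q1 : 0 ≤ δ * c * w ^ 2 := by positivity
    have q2 : 0 ≤ c / (2 * δ) * (s - m) ^ 2 := by positivity
    by_cases ha : ω ∈ A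
    · rw [Set.indicator_of_mem ha (fun _ => (1:ℝ))]
      have k2 : w * ramp z δ (Wbar ξ ω) ≤ δ * c * w ^ 2 + δ / c := by
        have a1 : w * ramp z δ (Wbar ξ ω) ≤ |w| * (2 * δ) :=
          mul_le_mul (le_abs_self w) (ramp_le hδ _ _) (ramp_nonneg _ _ _) (abs_nonneg _)
        have a2 : δ * c * w ^ 2 + δ / c - |w| * (2 * δ) = δ / c * (c * |w| - 1) ^ 2 := by
          rw [← sq_abs w]; field_simp; ring
        have a3 : 0 ≤ δ / c * (c * |w| - 1) ^ 2 := by positivity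
        linarith
      have k3 : m - s ≤ c / (2 * δ) * (s - m) ^ 2 + δ / (2 * c) := by
        have a2 : c / (2 * δ) * (s - m) ^ 2 + δ / (2 * c) - (m - s)
          = δ / (2 * c) * (c / δ * (s - m) + 1) ^ 2 := by field_simp; ring
        have a3 : 0 ≤ δ / (2 * c) * (c / δ * (s - m) + 1) ^ 2 := by positivity
        linarith
      have k4 : 3 / 2 * δ / c = δ / c + δ / (2 * c) := by field_simp; norm_num
      have k5 : 0 ≤ δ / (2 * c) := by positivity
      by_cases hb : ω ∈ B
      · rw [Set.indicator_of_mem hb] at k1 ⊢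
        linarith
      · rw [Set.indicator_of_notMem hb] at k1 ⊢
        linarith
    · have hb : ω ∉ B := fun hb => ha (by
        have hb' : Wbar ξ ω = z := hb
        change z - δ ≤ Wbar ξ ω
        linarith)
      have hr : ramp z δ (Wbar ξ ω) = 0 := ramp_zero (not_le.1 ha).le
      rw [hr] at k1
      rw [Set.indicator_of_notMem hb] at k1 ⊢
      rw [Set.indicator_of_notMem ha]
      linarith
  have g1 := hW2.integrable_sq.const_mul (δ * c)
  have g2 := hD2.integrable_sq.const_mul (c / (2 * δ))
  have g3 := hIA.const_mul (3 / 2 * δ / c)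
  have g4 : Integrable (fun ω => ∑ i, ξ i ω * ramp z δ (V i ω)) ℙ :=
    integrable_finsetSum _ fun i _ => hInt i
  have hfin := integral_mono (hIB.const_mul m) (((g1.add g2).add g3).sub g4) key
  have e1 : ∫ ω, (((δ * c * (∑ i, ξ i ω) ^ 2 + c / (2 * δ) * (S ω - m) ^ 2)
        + (3 / 2 * δ / c) * A.indicator (fun _ => (1:ℝ)) ω)
        - ∑ i, ξ i ω * ramp z δ (V i ω)) =
      δ * c * 1 + c / (2 * δ) * (∫ ω, (S ω - m) ^ 2) + (3 / 2 * δ / c) * (ℙ : Measure Ω).real A := by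
    rw [integral_sub (by exact (g1.add g2).add g3) g4, integral_add (by exact g1.add g2) g3,
      integral_add g1 g2, integral_const_mul, integral_const_mul, integral_const_mul,
      integral_sq_sum hmeas hindep hL2 hmean, hvar, integral_finsetSum _ fun i _ => hInt i]
    simp [hzero, integral_indicator_const, mA]
  have e2 : ∫ ω, m * B.indicator (fun _ => (1:ℝ)) ω = m * (ℙ : Measure Ω).real B := by
    rw [integral_const_mul, integral_indicator_const _ mB]; simp
  have hfin2 : m * (ℙ : Measure Ω).real B ≤ δ * c * 1 + c / (2 * δ) * (∫ ω, (S ω - m) ^ 2)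
      + (3 / 2 * δ / c) * (ℙ : Measure Ω).real A := by
    rw [← e1, ← e2]; exact hfin
  have f1 : c / (2 * δ) * (∫ ω, (S ω - m) ^ 2) ≤ c / (2 * δ) * δ ^ 2 := by gcongr
  have f2 : (3 / 2 * δ / c) * (ℙ : Measure Ω).real A ≤ (3 / 2 * δ / c) * c ^ 2 := by gcongr
  have f3 : c / (2 * δ) * δ ^ 2 = c * δ / 2 := by field_simp
  have f4 : (3 / 2 * δ / c) * c ^ 2 = 3 / 2 * δ * c := by field_simp
  have f5 : 1 / 2 * (ℙ : Measure Ω).real B ≤ m * (ℙ : Measure Ω).real B := by gcongr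
  linarith

lemma big_part (hmeas : ∀ i, Measurable (ξ i)) (hindep : iIndepFun ξ ℙ)
    (hL2 : ∀ i, MemLp (ξ i) 2 ℙ) (hmean : ∀ i, ∫ ω, ξ i ω = 0)
    (hvar : ∑ i, ∫ ω, (ξ i ω) ^ 2 = 1) (i : Fin n) {t : ℝ} (ht : 0 < t) :
    (ℙ : Measure Ω).real ({ω | 1 < ξ i ω} ∩ {ω | t ≤ ∑ j ∈ Finset.univ.erase i, ξ j ω})
      ≤ (t ^ 2)⁻¹ * ∫ ω, (if 1 < |ξ i ω| then (ξ i ω) ^ 2 else 0) := by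
  have h := (indep_rest hmeas hindep id measurable_id i).measure_inter_preimage_eq_mul
    (Set.Ioi 1) (Set.Ici t) measurableSet_Ioi measurableSet_Ici
  have e : (ℙ : Measure Ω).real
      ({ω | 1 < ξ i ω} ∩ {ω | t ≤ ∑ j ∈ Finset.univ.erase i, ξ j ω}) =
      (ℙ : Measure Ω).real {ω | 1 < ξ i ω} *
      (ℙ : Measure Ω).real {ω | t ≤ ∑ j ∈ Finset.univ.erase i, ξ j ω} := by
    rw [measureReal_def, measureReal_def, measureReal_def, ← ENNReal.toReal_mul]
    exact congrArg ENNReal.toReal h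
  have h1 := chebyshev hmeas hindep hL2 hmean hvar (Finset.univ.erase i) ht
  have mB : MeasurableSet {ω | 1 < ξ i ω} := measurableSet_lt measurable_const (hmeas i)
  have h2 : (ℙ : Measure Ω).real {ω | 1 < ξ i ω} ≤
      ∫ ω, (if 1 < |ξ i ω| then (ξ i ω) ^ 2 else 0) := by
    have : (ℙ : Measure Ω).real {ω | 1 < ξ i ω} =
        ∫ ω, ({ω | 1 < ξ i ω}.indicator (fun _ => (1:ℝ))) ω := by
      rw [integral_indicator_const _ mB]; simp
    rw [this]
    refine integral_mono ((integrable_const 1).indicator mB) ?_ fun ω => ?_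
    · refine (hL2 i).integrable_sq.mono' (Measurable.aestronglyMeasurable ?_)
        (Filter.Eventually.of_forall fun ω => ?_)
      · exact Measurable.ite (measurableSet_lt measurable_const (hmeas i).abs)
          ((hmeas i).pow_const 2) measurable_const
      · split_ifs <;> simp [sq_nonneg]
    · by_cases hω : 1 < ξ i ω
      · have : 1 < |ξ i ω| := hω.trans_le (le_abs_self _)
        simp only [Set.indicator_apply, Set.mem_ofPred_eq, hω, this, if_true]
        nlinarith
      · simp only [Set.indicator_apply, Set.mem_ofPred_eq, hω, if_false]
        split_ifs <;> positivity
  rw [e, mul_comm]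
  exact mul_le_mul h1 h2 measureReal_nonneg (by positivity)

lemma conc' (hmeas : ∀ i, Measurable (ξ i)) (hindep : iIndepFun ξ ℙ)
    (hL2 : ∀ i, MemLp (ξ i) 2 ℙ) (hmean : ∀ i, ∫ ω, ξ i ω = 0)
    (hvar : ∑ i, ∫ ω, (ξ i ω) ^ 2 = 1) (z : ℝ) (hz : 2 < z)
    (hβ0 : 0 ≤ beta2 ξ + beta3 ξ) (hβ : beta2 ξ + beta3 ξ ≤ 1 / 2) :
    (ℙ : Measure Ω).real {ω | Wbar ξ ω = z} ≤
      25 * ((1 + z) ^ 2)⁻¹ * (beta2 ξ + beta3 ξ) := by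
  have hδ : ∀ δ : ℝ, 0 < δ → 4 * δ ≤ 1 → beta2 ξ + beta3 ξ ≤ 2 * δ →
      (ℙ : Measure Ω).real {ω | Wbar ξ ω = z} ≤ 50 * ((1 + z) ^ 2)⁻¹ * δ := by
    intro δ h0 h4 hb
    refine (conc hmeas hindep hL2 hmean hvar z δ h0 h4 hb).trans ?_
    have h1 : (1 + z) ^ 2 ≤ 16 * Real.exp ((z - 3) / 2) := by
      have := Real.add_one_le_exp ((z - 3) / 4)
      have e : Real.exp ((z - 3) / 2) = Real.exp ((z - 3) / 4) ^ 2 := by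
        rw [← Real.exp_nat_mul]; congr 1; push_cast; ring
      rw [e]
      nlinarith
    have h2 : Real.exp ((1 - (z - δ)) / 2) * Real.exp ((z - 3) / 2) ≤ Real.exp (-(7 / 8)) := by
      rw [← Real.exp_add]
      apply Real.exp_le_exp.2
      linarith
    have h3 : Real.exp (-(7 / 8)) ≤ 25 / 48 := by
      rw [Real.exp_neg]
      have := Real.quadratic_le_exp_of_nonneg (x := 7 / 8) (by norm_num)
      rw [inv_le_comm₀ (Real.exp_pos _) (by norm_num)]
      linarith
    have h5 : Real.exp ((1 - (z - δ)) / 2) * (1 + z) ^ 2 ≤ 25 / 3 := by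
      have := mul_le_mul_of_nonneg_left h1 (Real.exp_pos ((1 - (z - δ)) / 2)).le
      linarith
    have h6 : Real.exp ((1 - (z - δ)) / 2) ≤ 25 / 3 * ((1 + z) ^ 2)⁻¹ := by
      rw [← div_eq_mul_inv, le_div_iff₀ (by positivity)]; exact h5
    have := mul_le_mul_of_nonneg_left h6 (by positivity : 0 ≤ 6 * δ)
    linarith
  have hq : 0 < ((1 + z) ^ 2)⁻¹ := by positivity
  rcases hβ0.eq_or_lt with h | h
  · rw [← h, mul_zero]
    refine le_of_forall_pos_le_add fun ε hε => ?_
    set q := ((1 + z) ^ 2)⁻¹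
    have hp : 0 < min (1 / 4) (ε / (50 * q)) := lt_min (by norm_num) (by positivity)
    have := hδ (min (1 / 4) (ε / (50 * q))) hp
      (by have := min_le_left (1 / 4) (ε / (50 * q)); linarith) (by rw [← h]; positivity)
    have h2 : 50 * q * min (1 / 4) (ε / (50 * q)) ≤ 50 * q * (ε / (50 * q)) := by
      gcongr; exact min_le_right _ _
    have h3 : 50 * q * (ε / (50 * q)) = ε := by field_simp
    linarith
  · have := hδ ((beta2 ξ + beta3 ξ) / 2) (by linarith) (by linarith) (by linarith)
    linarith

end aux

/-- Closeness of P(W >= z) and P(Wbar > z) for z > 2. -/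
theorem truncation_probability_bound
    {Ω : Type*} [MeasureSpace Ω] [IsProbabilityMeasure (ℙ : Measure Ω)]
    {n : ℕ} (ξ : Fin n → Ω → ℝ)
    (hmeas : ∀ i, Measurable (ξ i))
    (hindep : iIndepFun ξ ℙ)
    (hL2 : ∀ i, MemLp (ξ i) 2 ℙ)
    (hmean : ∀ i, ∫ ω, ξ i ω = 0)
    (hvar : ∑ i, ∫ ω, (ξ i ω) ^ 2 = 1)
    (z : ℝ) (hz : 2 < z) :
    |(ℙ {ω | z ≤ ∑ i, ξ i ω}).toReal - (ℙ {ω | z < Wbar ξ ω}).toReal|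
      ≤ 2 * ∑ i, (ℙ {ω | z / 4 < |ξ i ω|}).toReal
        + 4 * Real.exp 1 ^ 2 * ((1 + z) ^ 2)⁻¹ * (beta2 ξ + beta3 ξ) := by
  have hb2n : 0 ≤ beta2 ξ := Finset.sum_nonneg fun i _ => integral_nonneg fun ω => by
    simp only [Pi.zero_apply]; split_ifs <;> positivity
  have hb3n : 0 ≤ beta3 ξ := Finset.sum_nonneg fun i _ => integral_nonneg fun ω => by
    simp only [Pi.zero_apply]; split_ifs <;> positivity
  have hm : ∀ i, Measurable (fun ω => tr (ξ i ω)) := fun i => measurable_tr.comp (hmeas i)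
  have hmW : Measurable (Wbar ξ) := Finset.measurable_sum _ fun i _ => hm i
  have hmV : Measurable (fun ω => ∑ i, ξ i ω) := Finset.measurable_sum _ fun i _ => hmeas i
  have hWW : ∀ ω, Wbar ξ ω ≤ ∑ i, ξ i ω := fun ω => Finset.sum_le_sum fun i _ => tr_le _
  have hsub : {ω | z < Wbar ξ ω} ⊆ {ω | z ≤ ∑ i, ξ i ω} := fun ω hω =>
    (le_of_lt hω).trans (hWW ω)
  have mV : MeasurableSet {ω | z < Wbar ξ ω} := measurableSet_lt measurable_const hmW
  simp only [← measureReal_def]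
  have hq : 0 < ((1 + z) ^ 2)⁻¹ := by positivity
  have he : 29 ≤ 4 * Real.exp 1 ^ 2 := by
    have := Real.exp_one_gt_d9
    nlinarith
  have hP0 : 0 ≤ ∑ i, (ℙ : Measure Ω).real {ω | z / 4 < |ξ i ω|} :=
    Finset.sum_nonneg fun i _ => measureReal_nonneg
  have hz1 : (z ^ 2)⁻¹ ≤ 9 / 4 * ((1 + z) ^ 2)⁻¹ := by
    rw [← div_eq_mul_inv, ← one_div, div_le_div_iff₀ (by positivity) (by positivity)]
    nlinarith
  have hE : 29 * ((1 + z) ^ 2)⁻¹ * (beta2 ξ + beta3 ξ) ≤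
      4 * Real.exp 1 ^ 2 * ((1 + z) ^ 2)⁻¹ * (beta2 ξ + beta3 ξ) := by
    gcongr
  rw [abs_of_nonneg (sub_nonneg.2 (measureReal_mono hsub)), ← measureReal_sdiff hsub mV]
  refine le_trans ?_ (add_le_add_right hE _)
  rcases le_total (beta2 ξ + beta3 ξ) (1 / 2) with hβ | hβ
  · have hincl : {ω | z ≤ ∑ i, ξ i ω} \ {ω | z < Wbar ξ ω} ⊆
        {ω | Wbar ξ ω = z} ∪ ⋃ i, ({ω | z / 4 < |ξ i ω|} ∪
          ({ω | 1 < ξ i ω} ∩ {ω | 3 * z / 4 ≤ ∑ j ∈ Finset.univ.erase i, ξ j ω})) := by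
      rintro ω ⟨h1, h2⟩
      have h1' : z ≤ ∑ i, ξ i ω := h1
      have h2' : Wbar ξ ω ≤ z := not_lt.1 h2
      by_cases hall : ∀ i, ξ i ω ≤ 1
      · left
        have : Wbar ξ ω = ∑ i, ξ i ω := Finset.sum_congr rfl fun i _ => if_pos (hall i)
        exact le_antisymm h2' (this ▸ h1')
      · right
        push Not at hall
        obtain ⟨i, hi⟩ := hall
        refine Set.mem_iUnion.2 ⟨i, ?_⟩
        by_cases h4 : z / 4 < |ξ i ω|
        · exact Or.inl h4
        · refine Or.inr ⟨hi, ?_⟩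
          have := le_abs_self (ξ i ω)
          have h5 := Finset.add_sum_erase Finset.univ (fun j => ξ j ω) (Finset.mem_univ i)
          change 3 * z / 4 ≤ ∑ j ∈ Finset.univ.erase i, ξ j ω
          linarith
    have hc := conc' hmeas hindep hL2 hmean hvar z hz (by linarith) hβ
    have hz2 : ((3 * z / 4) ^ 2)⁻¹ ≤ 4 * ((1 + z) ^ 2)⁻¹ := by
      have : ((3 * z / 4) ^ 2)⁻¹ = 16 / 9 * (z ^ 2)⁻¹ := by field_simp; norm_num
      rw [this]; linarith
    have hU : (ℙ : Measure Ω).real (⋃ i, ({ω | z / 4 < |ξ i ω|} ∪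
          ({ω | 1 < ξ i ω} ∩ {ω | 3 * z / 4 ≤ ∑ j ∈ Finset.univ.erase i, ξ j ω}))) ≤
        ∑ i, (ℙ : Measure Ω).real {ω | z / 4 < |ξ i ω|} + 4 * ((1 + z) ^ 2)⁻¹ * beta2 ξ := by
      refine (measureReal_iUnion_fintype_le _).trans ?_
      rw [beta2, Finset.mul_sum, ← Finset.sum_add_distrib]
      refine Finset.sum_le_sum fun i _ => (measureReal_union_le _ _).trans ?_
      refine add_le_add_right ((big_part hmeas hindep hL2 hmean hvar i (by linarith)).trans ?_) _
      refine mul_le_mul_of_nonneg_right hz2 (integral_nonneg fun ω => ?_)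
      simp only [Pi.zero_apply]; split_ifs <;> positivity
    have h1 := (measureReal_mono (μ := (ℙ : Measure Ω)) hincl).trans (measureReal_union_le _ _)
    have h2 : 0 ≤ ((1 + z) ^ 2)⁻¹ * beta3 ξ := by positivity
    linarith
  · have h1 : (ℙ : Measure Ω).real ({ω | z ≤ ∑ i, ξ i ω} \ {ω | z < Wbar ξ ω}) ≤ (z ^ 2)⁻¹ :=
      (measureReal_mono Set.sdiff_subset).trans
        (chebyshev hmeas hindep hL2 hmean hvar Finset.univ (by linarith))
    have h2 : 29 * ((1 + z) ^ 2)⁻¹ * (1 / 2) ≤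
        29 * ((1 + z) ^ 2)⁻¹ * (beta2 ξ + beta3 ξ) := by gcongr
    linarith
end

section
/- For every z ≥ 0, P(W ≥ z) ≤ Σᵢ₌₁ⁿ P(|ξᵢ| > (z ∨ 1)/4) + e² (1 + z²/2)^{−2}. -/
open MeasureTheory ProbabilityTheory Real

lemma exp_aux_neg {y : ℝ} (hy : y ≤ 0) : Real.exp y ≤ 1 + y + y ^ 2 / 2 := by
  have h : AntitoneOn (fun y : ℝ => 1 + y + y ^ 2 / 2 - Real.exp y) Set.univ := by
    have hd : ∀ x : ℝ, HasDerivAt (fun y : ℝ => 1 + y + y ^ 2 / 2 - Real.exp y)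
        (1 + x - Real.exp x) x := by
      intro x
      have := (((hasDerivAt_id x).const_add 1).add (((hasDerivAt_id x).pow 2).div_const 2)).sub
        (Real.hasDerivAt_exp x)
      exact this.congr_deriv (by simp)
    apply antitoneOn_of_deriv_nonpos convex_univ
    · exact fun x _ => (hd x).continuousAt.continuousWithinAt
    · exact fun x _ => (hd x).differentiableAt.differentiableWithinAt
    · intro x _
      rw [(hd x).deriv]
      linarith [Real.add_one_le_exp x]
  have := h (Set.mem_univ y) (Set.mem_univ 0) hy
  simp at this
  linarith

lemma exp_aux_pos {s b : ℝ} (hs0 : 0 ≤ s) (hs1 : s ≤ 1) (hb : 0 ≤ b) :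
    Real.exp (s * b) - 1 - s * b ≤ s ^ 2 * (Real.exp b - 1 - b) := by
  have h : MonotoneOn (fun y : ℝ => s ^ 2 * (Real.exp y - 1 - y)
      - (Real.exp (s * y) - 1 - s * y)) (Set.univ) := by
    have hd : ∀ x : ℝ, HasDerivAt (fun y : ℝ => s ^ 2 * (Real.exp y - 1 - y)
      - (Real.exp (s * y) - 1 - s * y))
        (s ^ 2 * (Real.exp x - 1) - (Real.exp (s * x) * s - s)) x := by
      intro x
      have h1 : HasDerivAt (fun y : ℝ => s * y) s x := by
        simpa using (hasDerivAt_id x).const_mul s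
      exact ((((Real.hasDerivAt_exp x).sub_const 1).sub (hasDerivAt_id x)).const_mul (s ^ 2)).sub
        ((h1.exp.sub_const 1).sub h1)
    apply monotoneOn_of_deriv_nonneg convex_univ
    · exact fun x _ => (hd x).continuousAt.continuousWithinAt
    · exact fun x _ => (hd x).differentiableAt.differentiableWithinAt
    · intro x _
      rw [(hd x).deriv]
      have hc := convexOn_exp.2 (Set.mem_univ x) (Set.mem_univ 0) hs0 (sub_nonneg.2 hs1)
        (by ring)
      simp only [smul_eq_mul, mul_zero, add_zero, Real.exp_zero, mul_one] at hc
      nlinarith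
  have := h (Set.mem_univ 0) (Set.mem_univ b) hb
  simp at this
  linarith

lemma exp_aux {y b : ℝ} (hb : 0 < b) (hy : y ≤ b) :
    Real.exp y ≤ 1 + y + (Real.exp b - 1 - b) / b ^ 2 * y ^ 2 := by
  rcases le_total y 0 with h | h
  · have h1 := exp_aux_neg h
    have h2 : 1 / 2 ≤ (Real.exp b - 1 - b) / b ^ 2 := by
      rw [le_div_iff₀ (by positivity)]
      linarith [Real.quadratic_le_exp_of_nonneg hb.le]
    nlinarith [sq_nonneg y]
  · have h1 := exp_aux_pos (s := y / b) (by positivity) ((div_le_one hb).2 hy) hb.le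
    rw [div_mul_cancel₀ _ hb.ne'] at h1
    have : (y / b) ^ 2 * (Real.exp b - 1 - b) = (Real.exp b - 1 - b) / b ^ 2 * y ^ 2 := by
      field_simp
    linarith

lemma trunc_aux {a t x : ℝ} (ha : 0 < a) (ht : 0 < t) :
    Real.exp (t * (if x ≤ a then x else 0)) ≤
      1 + t * x + (Real.exp (t * a) - 1 - t * a) / a ^ 2 * x ^ 2 := by
  split_ifs with h
  · have := exp_aux (y := t * x) (b := t * a) (by positivity) (by gcongr)
    have e : (Real.exp (t * a) - 1 - t * a) / (t * a) ^ 2 * (t * x) ^ 2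
      = (Real.exp (t * a) - 1 - t * a) / a ^ 2 * x ^ 2 := by field_simp
    linarith
  · push Not at h
    have h1 : 0 ≤ (Real.exp (t * a) - 1 - t * a) / a ^ 2 * x ^ 2 := by
      have : 0 ≤ Real.exp (t * a) - 1 - t * a := by linarith [Real.add_one_le_exp (t * a)]
      positivity
    have : 0 < t * x := mul_pos ht (ha.trans h)
    simp
    linarith

/-- Tail bound (4.15) for P(W >= z). -/
theorem W_tail_bound
    {Ω : Type*} [MeasureSpace Ω] [IsProbabilityMeasure (ℙ : Measure Ω)]
    {n : ℕ} (ξ : Fin n → Ω → ℝ)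
    (hmeas : ∀ i, Measurable (ξ i))
    (hindep : iIndepFun ξ ℙ)
    (hL2 : ∀ i, MemLp (ξ i) 2 ℙ)
    (hmean : ∀ i, ∫ ω, ξ i ω = 0)
    (hvar : ∑ i, ∫ ω, (ξ i ω) ^ 2 = 1)
    (z : ℝ) (hz : 0 ≤ z) :
    (ℙ {ω | z ≤ ∑ i, ξ i ω}).toReal
      ≤ (∑ i, (ℙ {ω | max z 1 / 4 < |ξ i ω|}).toReal)
        + Real.exp 1 ^ 2 * ((1 + z ^ 2 / 2) ^ 2)⁻¹ := by
  have hsum0 : 0 ≤ ∑ i, (ℙ {ω | max z 1 / 4 < |ξ i ω|}).toReal :=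
    Finset.sum_nonneg fun i _ => ENNReal.toReal_nonneg
  rcases lt_or_ge z 1 with hz1 | hz1
  · have h1 : (ℙ {ω | z ≤ ∑ i, ξ i ω}).toReal ≤ 1 := measureReal_le_one
    have h2 : (1 : ℝ) ≤ Real.exp 1 ^ 2 * ((1 + z ^ 2 / 2) ^ 2)⁻¹ := by
      rw [← div_eq_mul_inv, one_le_div (by positivity)]
      have : 1 + z ^ 2 / 2 ≤ Real.exp 1 := by nlinarith [Real.add_one_le_exp 1]
      gcongr
    linarith
  rw [max_eq_left hz1] at *
  have hz0 : 0 < z := by linarith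
  set a := z / 2 with ha
  have ha0 : 0 < a := by positivity
  set t := Real.log (1 + z ^ 2 / 2) / a with htdef
  have hlog : 0 < Real.log (1 + z ^ 2 / 2) := Real.log_pos (by nlinarith)
  have ht : 0 < t := by positivity
  have hta : t * a = Real.log (1 + z ^ 2 / 2) := div_mul_cancel₀ _ ha0.ne'
  set K := (Real.exp (t * a) - 1 - t * a) / a ^ 2 with hK
  let g : ℝ → ℝ := fun x => if x ≤ a then x else 0
  have hg : Measurable g := Measurable.ite measurableSet_Iic measurable_id measurable_const
  let X : Fin n → Ω → ℝ := fun i => g ∘ ξ i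
  have hXm : ∀ i, Measurable (X i) := fun i => hg.comp (hmeas i)
  have hXi : iIndepFun X ℙ := hindep.comp _ (fun _ => hg)
  have hi1 : ∀ i, Integrable (ξ i) ℙ := fun i => (hL2 i).integrable (by norm_num)
  have hi2 : ∀ i, Integrable (fun ω => (ξ i ω) ^ 2) ℙ := fun i => (hL2 i).integrable_sq
  have hib : ∀ i, Integrable (fun ω => 1 + t * ξ i ω + K * (ξ i ω) ^ 2) ℙ := fun i =>
    ((integrable_const _).add ((hi1 i).const_mul t)).add ((hi2 i).const_mul K)
  have hpt : ∀ i ω, Real.exp (t * X i ω) ≤ 1 + t * ξ i ω + K * (ξ i ω) ^ 2 :=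
    fun i ω => trunc_aux ha0 ht
  have hXe : ∀ i, Integrable (fun ω => Real.exp (t * X i ω)) ℙ := fun i =>
    (hib i).mono' (((hXm i).const_mul t).exp.aestronglyMeasurable)
      (Filter.Eventually.of_forall fun ω => by
        rw [Real.norm_eq_abs, abs_of_pos (Real.exp_pos _)]; exact hpt i ω)
  have hmgf : ∀ i, mgf (X i) ℙ t ≤ Real.exp (K * ∫ ω, (ξ i ω) ^ 2) := by
    intro i
    calc mgf (X i) ℙ t ≤ ∫ ω, (1 + t * ξ i ω + K * (ξ i ω) ^ 2) :=
          integral_mono (hXe i) (hib i) (hpt i)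
      _ = 1 + K * ∫ ω, (ξ i ω) ^ 2 := by
          have hj : Integrable (fun ω => 1 + t * ξ i ω) ℙ :=
            (integrable_const _).add ((hi1 i).const_mul t)
          rw [integral_add hj ((hi2 i).const_mul K),
            integral_add (integrable_const _) ((hi1 i).const_mul t), integral_const_mul,
            integral_const_mul, hmean i]
          simp
      _ ≤ _ := by linarith [Real.add_one_le_exp (K * ∫ ω, (ξ i ω) ^ 2)]
  have hmgfs : mgf (∑ i, X i) ℙ t ≤ Real.exp K := by
    rw [hXi.mgf_sum hXm]
    calc _ ≤ ∏ i, Real.exp (K * ∫ ω, (ξ i ω) ^ 2) :=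
          Finset.prod_le_prod (fun i _ => mgf_nonneg) (fun i _ => hmgf i)
      _ = Real.exp K := by rw [← Real.exp_sum, ← Finset.mul_sum, hvar, mul_one]
  have hch : (ℙ : Measure Ω).real {ω | z ≤ (∑ i, X i) ω} ≤ Real.exp (-t * z) * Real.exp K :=
    (measure_ge_le_exp_mul_mgf z ht.le
      (hXi.integrable_exp_mul_sum hXm (fun i _ => hXe i))).trans (by gcongr)
  have hfin : Real.exp (-t * z) * Real.exp K ≤ Real.exp 1 ^ 2 * ((1 + z ^ 2 / 2) ^ 2)⁻¹ := by
    have hp : (0 : ℝ) < 1 + z ^ 2 / 2 := by positivity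
    have e1 : Real.exp 1 ^ 2 * ((1 + z ^ 2 / 2) ^ 2)⁻¹
        = Real.exp (2 - 2 * Real.log (1 + z ^ 2 / 2)) := by
      rw [Real.exp_sub, two_mul (Real.log _), Real.exp_add, Real.exp_log hp, ← Real.exp_nat_mul,
        ← div_eq_mul_inv, sq (1 + z ^ 2 / 2)]
      norm_num
    rw [e1, ← Real.exp_add, Real.exp_le_exp, hK, hta, Real.exp_log hp]
    have e2 : -t * z = -2 * Real.log (1 + z ^ 2 / 2) := by
      rw [← hta, ha]; ring
    have e3 : (1 + z ^ 2 / 2 - 1 - Real.log (1 + z ^ 2 / 2)) / a ^ 2 ≤ 2 := by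
      rw [div_le_iff₀ (by positivity), ha]
      nlinarith
    linarith
  have hsub : {ω | z ≤ ∑ i, ξ i ω} ⊆
      (⋃ i, {ω | z / 4 < |ξ i ω|}) ∪ {ω | z ≤ (∑ i, X i) ω} := by
    intro ω hω
    by_cases h : ∃ i, z / 4 < |ξ i ω|
    · exact Or.inl (Set.mem_iUnion.2 h)
    · right
      push Not at h
      have : ∀ i, X i ω = ξ i ω := fun i => if_pos (by
        have := le_abs_self (ξ i ω)
        linarith [h i])
      simpa [Finset.sum_apply, this] using hω
  calc (ℙ : Measure Ω).real {ω | z ≤ ∑ i, ξ i ω} ≤ _ := measureReal_mono hsub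
    _ ≤ _ := measureReal_union_le _ _
    _ ≤ _ := add_le_add (measureReal_iUnion_fintype_le _) (hch.trans hfin)
end
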